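/- For every integer k ≥ 1, the (k+1)×(k+1) real matrix M with entries M_{j,i} = i^j + (i+1)^j for j, i ∈ {0,1,…,k} (with the convention 0^0 = 1) is invertible; consequently, the order-condition linear system for the two-point-combined k-step finite-difference weights has a unique solution. -/

import Mathlib

/-!
The row of index `j` evaluates the polynomial `X ^ j + (X + 1) ^ j`, of degree `j` and leading
coefficient `2`, at the nodes `0, …, k`. Expanding these polynomials in monomials factors the
transposed matrix as the Vandermonde matrix of the nodes times an upper triangular matrix with
diagonal entries `2`. The first factor is invertible because the nodes are distinct, the second
because `2 ≠ 0`.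
-/

open Matrix Polynomial

section Semiring

variable {R : Type*} [Semiring R]

theorem natDegree_X_pow_add_X_add_C_pow_le (a : R) (n : ℕ) :
    (X ^ n + (X + C a) ^ n).natDegree ≤ n := by
  compute_degree

theorem coeff_X_pow_add_X_add_C_pow_self (a : R) (n : ℕ) :
    (X ^ n + (X + C a) ^ n).coeff n = 2 := by
  rw [coeff_add, coeff_X_pow_self, coeff_X_add_C_pow, Nat.sub_self, pow_zero, Nat.choose_self,
    Nat.cast_one, mul_one, one_add_one_eq_two]

theorem existsUnique_mulVec_eq_of_isUnit {n : Type*} [Fintype n] [DecidableEq n]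
    {A : Matrix n n R} (hA : IsUnit A) (b : n → R) : ∃! x, A *ᵥ x = b := by
  have hsurj : Function.Surjective A.mulVec :=
    mulVec_surjective_iff_exists_right_inverse.2 hA.exists_right_inv
  exact Function.Bijective.existsUnique ⟨mulVec_injective_of_isUnit hA, hsurj⟩ b

end Semiring

section CommRing

variable {R : Type*} [CommRing R]

theorem det_eval_eq_det_vandermonde_mul_prod_coeff {n : ℕ} (v : Fin n → R) (p : Fin n → R[X])
    (hp : ∀ j, (p j).natDegree ≤ j) :
    (of fun i j => (p j).eval (v i)).det = (vandermonde v).det * ∏ j, (p j).coeff j := by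
  rw [eval_matrixOfPolynomials_eq_vandermonde_mul_matrixOfPolynomials v p hp, det_mul,
    det_of_isUpperTriangular (matrixOfPolynomials_blockTriangular p hp)]
  simp only [of_apply]

theorem det_matrix_pow_add_add_pow {n : ℕ} (v : Fin n → R) (a : R) :
    (of fun j i : Fin n => v i ^ (j : ℕ) + (v i + a) ^ (j : ℕ)).det =
      (vandermonde v).det * 2 ^ n := by
  have hdet := det_eval_eq_det_vandermonde_mul_prod_coeff v
    (fun j => X ^ (j : ℕ) + (X + C a) ^ (j : ℕ))
    fun j => natDegree_X_pow_add_X_add_C_pow_le a j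
  simp only [eval_add, eval_pow, eval_X, eval_C, coeff_X_pow_add_X_add_C_pow_self,
    Finset.prod_const, Finset.card_univ, Fintype.card_fin] at hdet
  rw [← hdet, ← det_transpose]
  rfl

end CommRing

theorem isUnit_matrix_pow_add_add_pow {K : Type*} [Field K] (h2 : (2 : K) ≠ 0) {n : ℕ}
    {v : Fin n → K} (hv : Function.Injective v) (a : K) :
    IsUnit (of fun j i : Fin n => v i ^ (j : ℕ) + (v i + a) ^ (j : ℕ)) := by
  rw [isUnit_iff_isUnit_det, det_matrix_pow_add_add_pow, isUnit_iff_ne_zero]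
  exact mul_ne_zero (det_vandermonde_ne_zero_iff.2 hv) (pow_ne_zero n h2)

theorem two_point_order_condition_matrix_invertible_general {K : Type*} [Field K]
    (h2 : (2 : K) ≠ 0) {n : ℕ} {v : Fin n → K} (hv : Function.Injective v) (a : K) :
    IsUnit (of fun j i : Fin n => v i ^ (j : ℕ) + (v i + a) ^ (j : ℕ)) ∧
    ∀ b : Fin n → K, ∃! c : Fin n → K,
      ∀ j : Fin n, ∑ i : Fin n, c i * (v i ^ (j : ℕ) + (v i + a) ^ (j : ℕ)) = b j := by
  have hunit := isUnit_matrix_pow_add_add_pow h2 hv a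
  refine ⟨hunit, fun b => ?_⟩
  simpa only [funext_iff, mulVec, dotProduct, of_apply, mul_comm] using
    existsUnique_mulVec_eq_of_isUnit hunit b

/-- The coefficient matrix `M_{j,i} = i^j + (i+1)^j` of the order-condition linear
system for the two-point-combined `k`-step finite-difference weights is invertible,
hence the system has a unique solution. -/
theorem two_point_order_condition_matrix_invertible (k : ℕ) (hk : 1 ≤ k) :
    IsUnit (Matrix.of (fun j i : Fin (k + 1) =>
        ((i : ℕ) : ℝ) ^ (j : ℕ) + (((i : ℕ) : ℝ) + 1) ^ (j : ℕ))) ∧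
    ∃! c : Fin (k + 1) → ℝ,
      ∀ j : Fin (k + 1),
        ∑ i : Fin (k + 1),
            c i * (((i : ℕ) : ℝ) ^ (j : ℕ) + (((i : ℕ) : ℝ) + 1) ^ (j : ℕ)) =
          if (j : ℕ) = 1 then 1 else 0 := by
  have h := two_point_order_condition_matrix_invertible_general (two_ne_zero (α := ℝ))
    (Nat.cast_injective.comp (Fin.val_injective (n := k + 1))) 1
  exact ⟨h.1, h.2 fun j => if (j : ℕ) = 1 then 1 else 0⟩
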